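/- Suppose the symmetric matrix P_SOS and the positive semidefinite symmetric matrix Q satisfy: aᵀP_SOSa ≥ εaᵀa for all a ∈ ℝⁿ, and 2aᵀP_SOS(La + Υ(a)) + (δ² − aᵀa)aᵀQa + εaᵀa ≤ 0 for all a ∈ ℝⁿ. Then for every initial condition with ‖a₀‖ ≤ δ_{f,SOS} = δ√(λmin(P_SOS)/λmax(P_SOS)), every continuous input f with sup_{0≤t≤τ} ‖f(t)‖ ≤ f_SOS = λmin(P_SOS)εδ/(λmax(P_SOS)‖2P_SOS‖), and every continuously differentiable solution a : [0,τ] → ℝⁿ of ȧ(t) = La(t) + Υ(a(t)) + f(t) with a(0) = a₀ and output y(t) = a(t), the truncated output satisfies ‖y_τ‖_{L∞} ≤ γ_SOS‖f_τ‖_{L∞} + β_SOS, where γ_SOS = λmax(P_SOS)‖2P_SOS‖/(λmin(P_SOS)ε) and β_SOS = ‖a₀‖√(λmax(P_SOS)/λmin(P_SOS)). -/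

import Mathlib

/-!
The storage function is `V(t) = a(t)ᵀ P a(t)`. Write `m = lamMin P`, `M = lamMax P`,
`s = specNorm (2P)`, `r = ‖a‖` and `F = ‖f_τ‖_{L∞}`, so that `m r² ≤ V ≤ M r²`
(`lamMin_mul_le`, `le_lamMax_mul`). The second certificate and Cauchy–Schwarz give, along the
trajectory, `V' ≤ r (s F - ε r) + (r² - δ²) aᵀ Q a`.

Put `C = max (M ‖a₀‖²) (M (s F / ε)²)`. Then `V(0) ≤ C`, and the smallness of `a₀` and `f` gives
`C ≤ m δ²`. Where `V ≥ C`, the first term is nonpositive because `r ≥ s F / ε`, and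
`r² - δ² ≤ (V - C) / m`, so `V' ≤ K (V - C)` with `K` a bound for `aᵀ Q a / m` on `[0, τ]`
(`deriv_bound`). A one-sided Grönwall argument (`le_of_deriv_le_mul_above`) then yields `V ≤ C` on
all of `[0, τ]`. This treats the boundary case `C = m δ²`, where the trajectory might momentarily
leave the ball of radius `δ`, on the same footing as `C < m δ²`. Finally `r² ≤ V / m ≤ C / m` and
`m ≤ M` give the stated bound.
-/

noncomputable section

open Matrix Set MeasureTheory

/-- Euclidean norm on `Fin n → ℝ`. -/
def eNorm {n : ℕ} (a : Fin n → ℝ) : ℝ := Real.sqrt (∑ i, a i ^ 2)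

/-- Truncation of a signal: equals `g` on `(-∞, τ]` (in particular on `[0, τ]`) and `0` for `t > τ`. -/
def trunc {E : Type*} [Zero E] (τ : ℝ) (g : ℝ → E) : ℝ → E := fun t => if t ≤ τ then g t else 0

/-- The `L∞` norm of a vector-valued signal on `[0, ∞)`: `sup_{t ≥ 0} ‖g t‖`. -/
def eLinf {n : ℕ} (g : ℝ → Fin n → ℝ) : ℝ := ⨆ t : Set.Ici (0:ℝ), eNorm (g t.1)

/-- The `Lp` norm of a vector-valued signal on `[0, ∞)`: `(∫₀^∞ ‖g t‖^p dt)^(1/p)`. -/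
def eLp {n : ℕ} (p : ℝ) (g : ℝ → Fin n → ℝ) : ℝ :=
  (∫ t in Set.Ioi (0:ℝ), eNorm (g t) ^ p) ^ (1/p)

/-- Smallest eigenvalue of a symmetric matrix, via its Rayleigh quotient characterization. -/
def lamMin {n : ℕ} (P : Matrix (Fin n) (Fin n) ℝ) : ℝ :=
  sInf {r | ∃ a : Fin n → ℝ, eNorm a = 1 ∧ r = a ⬝ᵥ P.mulVec a}

/-- Largest eigenvalue of a symmetric matrix, via its Rayleigh quotient characterization. -/
def lamMax {n : ℕ} (P : Matrix (Fin n) (Fin n) ℝ) : ℝ :=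
  sSup {r | ∃ a : Fin n → ℝ, eNorm a = 1 ∧ r = a ⬝ᵥ P.mulVec a}

/-- Spectral norm of a matrix: the induced Euclidean operator norm. -/
def specNorm {n : ℕ} (M : Matrix (Fin n) (Fin n) ℝ) : ℝ :=
  sSup {r | ∃ a : Fin n → ℝ, eNorm a = 1 ∧ r = eNorm (M.mulVec a)}

/-- The quadratic nonlinearity `Υ`, with components `Υₘ(a) = aᵀ Rₘ a`. -/
def Ups {n : ℕ} (R : Fin n → Matrix (Fin n) (Fin n) ℝ) (a : Fin n → ℝ) : Fin n → ℝ :=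
  fun m => a ⬝ᵥ (R m).mulVec a


lemma eNorm_nonneg {n : ℕ} (a : Fin n → ℝ) : 0 ≤ eNorm a := Real.sqrt_nonneg _

lemma eNorm_sq {n : ℕ} (a : Fin n → ℝ) : eNorm a ^ 2 = a ⬝ᵥ a := by
  rw [eNorm, Real.sq_sqrt (Finset.sum_nonneg fun i _ => sq_nonneg _)]
  simp [dotProduct, sq]

lemma eNorm_zero {n : ℕ} : eNorm (0 : Fin n → ℝ) = 0 := by simp [eNorm]

lemma eNorm_smul {n : ℕ} (c : ℝ) (hc : 0 ≤ c) (a : Fin n → ℝ) : eNorm (c • a) = c * eNorm a := by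
  have h : eNorm (c • a) ^ 2 = (c * eNorm a) ^ 2 := by
    rw [mul_pow, eNorm_sq, eNorm_sq]
    simp [dotProduct_smul, smul_dotProduct]; ring
  exact (pow_left_inj₀ (eNorm_nonneg _) (mul_nonneg hc (eNorm_nonneg _)) two_ne_zero).1 h

lemma dotProduct_le_eNorm {n : ℕ} (a b : Fin n → ℝ) : a ⬝ᵥ b ≤ eNorm a * eNorm b :=
  Real.sum_mul_le_sqrt_mul_sqrt _ _ _

lemma continuous_eNorm {n : ℕ} : Continuous (eNorm : (Fin n → ℝ) → ℝ) := by
  unfold eNorm; fun_prop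

lemma continuous_quad {n : ℕ} (P : Matrix (Fin n) (Fin n) ℝ) :
    Continuous fun a : Fin n → ℝ => a ⬝ᵥ P.mulVec a := by
  simp only [dotProduct, mulVec]; fun_prop

/-- The Euclidean unit sphere lies in the compact cube `[-1, 1]ⁿ`. -/
lemma mem_cube {n : ℕ} {a : Fin n → ℝ} (h : eNorm a = 1) : a ∈ Icc (-1 : Fin n → ℝ) 1 := by
  have h1 : ∀ i, |a i| ≤ 1 := fun i => by
    rw [← h, eNorm]
    apply Real.abs_le_sqrt
    exact Finset.single_le_sum (f := fun i => a i ^ 2) (fun i _ => sq_nonneg _) (Finset.mem_univ i)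
  exact ⟨fun i => (abs_le.1 (h1 i)).1, fun i => (abs_le.1 (h1 i)).2⟩

lemma bddAbove_sphere {n : ℕ} {g : (Fin n → ℝ) → ℝ} (hg : Continuous g) :
    BddAbove {r | ∃ a : Fin n → ℝ, eNorm a = 1 ∧ r = g a} := by
  refine ((isCompact_Icc (a := (-1 : Fin n → ℝ)) (b := 1)).bddAbove_image hg.continuousOn).mono ?_
  rintro r ⟨a, ha, rfl⟩
  exact ⟨a, mem_cube ha, rfl⟩

lemma bddBelow_sphere {n : ℕ} {g : (Fin n → ℝ) → ℝ} (hg : Continuous g) :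
    BddBelow {r | ∃ a : Fin n → ℝ, eNorm a = 1 ∧ r = g a} := by
  refine ((isCompact_Icc (a := (-1 : Fin n → ℝ)) (b := 1)).bddBelow_image hg.continuousOn).mono ?_
  rintro r ⟨a, ha, rfl⟩
  exact ⟨a, mem_cube ha, rfl⟩

/-- Polar decomposition of a nonzero vector, by which the sphere suprema and infima defining
`lamMin`, `lamMax` and `specNorm` extend to all vectors by homogeneity. -/
lemma polar {n : ℕ} (a : Fin n → ℝ) :
    a = 0 ∨ ∃ (r : ℝ) (u : Fin n → ℝ), 0 ≤ r ∧ eNorm u = 1 ∧ a = r • u := by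
  by_cases h : eNorm a = 0
  · left
    rw [← dotProduct_self_eq_zero, ← eNorm_sq, h]; norm_num
  · right
    refine ⟨eNorm a, (eNorm a)⁻¹ • a, eNorm_nonneg a, ?_, ?_⟩
    · rw [eNorm_smul _ (inv_nonneg.2 (eNorm_nonneg a)), inv_mul_cancel₀ h]
    · rw [smul_smul, mul_inv_cancel₀ h, one_smul]

lemma le_lamMax_mul {n : ℕ} (P : Matrix (Fin n) (Fin n) ℝ) (a : Fin n → ℝ) :
    a ⬝ᵥ P.mulVec a ≤ lamMax P * eNorm a ^ 2 := by
  rcases polar a with rfl | ⟨r, u, hr, hu, rfl⟩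
  · simp [eNorm_zero]
  · have h : u ⬝ᵥ P.mulVec u ≤ lamMax P :=
      le_csSup (bddAbove_sphere (continuous_quad P)) ⟨u, hu, rfl⟩
    rw [eNorm_smul r hr, hu]
    simp only [mulVec_smul, dotProduct_smul, smul_dotProduct, smul_eq_mul]
    nlinarith [mul_le_mul_of_nonneg_left h (sq_nonneg r)]

lemma lamMin_mul_le {n : ℕ} (P : Matrix (Fin n) (Fin n) ℝ) (a : Fin n → ℝ) :
    lamMin P * eNorm a ^ 2 ≤ a ⬝ᵥ P.mulVec a := by
  rcases polar a with rfl | ⟨r, u, hr, hu, rfl⟩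
  · simp [eNorm_zero]
  · have h : lamMin P ≤ u ⬝ᵥ P.mulVec u :=
      csInf_le (bddBelow_sphere (continuous_quad P)) ⟨u, hu, rfl⟩
    rw [eNorm_smul r hr, hu]
    simp only [mulVec_smul, dotProduct_smul, smul_dotProduct, smul_eq_mul]
    nlinarith [mul_le_mul_of_nonneg_left h (sq_nonneg r)]

lemma eNorm_mulVec_le {n : ℕ} (A : Matrix (Fin n) (Fin n) ℝ) (a : Fin n → ℝ) :
    eNorm (A.mulVec a) ≤ specNorm A * eNorm a := by
  rcases polar a with rfl | ⟨r, u, hr, hu, rfl⟩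
  · simp [eNorm_zero]
  · have hc : Continuous fun a : Fin n → ℝ => eNorm (A.mulVec a) :=
      continuous_eNorm.comp (by fun_prop)
    have h : eNorm (A.mulVec u) ≤ specNorm A := le_csSup (bddAbove_sphere hc) ⟨u, hu, rfl⟩
    rw [eNorm_smul r hr, hu, mulVec_smul, eNorm_smul r hr]
    nlinarith [mul_le_mul_of_nonneg_left h hr]

lemma hasDerivWithinAt_quad {n : ℕ} {P : Matrix (Fin n) (Fin n) ℝ} (hP : Pᵀ = P)
    {a : ℝ → Fin n → ℝ} {a' : Fin n → ℝ} {S : Set ℝ} {t : ℝ} (h : HasDerivWithinAt a a' S t) :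
    HasDerivWithinAt (fun t => a t ⬝ᵥ P.mulVec (a t)) (2 * (a t ⬝ᵥ P.mulVec a')) S t := by
  have h1 : HasDerivWithinAt (fun t => P.mulVec (a t)) (P.mulVec a') S t :=
    (P.mulVecLin.toContinuousLinearMap.hasFDerivAt (x := a t)).comp_hasDerivWithinAt t h
  rw [hasDerivWithinAt_pi] at h h1
  have h2 := HasDerivWithinAt.fun_sum (u := Finset.univ) fun i _ => (h i).mul (h1 i)
  have hsym : a' ⬝ᵥ P.mulVec (a t) = a t ⬝ᵥ P.mulVec a' := by
    rw [dotProduct_mulVec, ← mulVec_transpose, hP, dotProduct_comm]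
  refine h2.congr_deriv ?_
  rw [Finset.sum_add_distrib, two_mul]
  change a' ⬝ᵥ P.mulVec (a t) + a t ⬝ᵥ P.mulVec a' = _
  rw [hsym]

/-- One-sided Grönwall comparison: if `V' ≤ K (V - C)` holds wherever `V ≥ C`, then `V` cannot
cross the level `C` upwards. -/
lemma le_of_deriv_le_mul_above {V V' : ℝ → ℝ} {τ K C : ℝ}
    (hV : ∀ t ∈ Icc (0:ℝ) τ, HasDerivWithinAt V (V' t) (Icc 0 τ) t) (h0 : V 0 ≤ C)
    (hb : ∀ t ∈ Icc (0:ℝ) τ, C ≤ V t → V' t ≤ K * (V t - C)) :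
    ∀ t ∈ Icc (0:ℝ) τ, V t ≤ C := by
  intro t ht
  refine le_of_forall_pos_le_add fun e he => ?_
  -- The strict barrier `C + η exp ((K + 1) x)`, with `η` chosen so that it equals `C + e` at `t`.
  set η := e * Real.exp (-((K + 1) * t)) with hη
  have hηp : 0 < η := by positivity
  have hB : ∀ x, HasDerivAt (fun x => C + η * Real.exp ((K + 1) * x))
      (η * (Real.exp ((K + 1) * x) * (K + 1))) x := fun x => by
    have := (((hasDerivAt_id x).const_mul (K + 1)).exp.const_mul η).const_add C
    simpa using this
  have key := image_le_of_deriv_right_lt_deriv_boundary' (a := 0) (b := τ) (f := V) (f' := V')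
    (B := fun x => C + η * Real.exp ((K + 1) * x))
    (fun x hx => (hV x hx).continuousWithinAt)
    (fun x hx => (hV x (Ico_subset_Icc_self hx)).mono_of_mem_nhdsWithin
      (Icc_mem_nhdsGE_of_mem hx))
    (by simp; linarith)
    (fun x _ => (hB x).continuousAt.continuousWithinAt) (fun x _ => (hB x).hasDerivWithinAt)
    (fun x hx heq => by
      have hp : 0 < η * Real.exp ((K + 1) * x) := by positivity
      have := hb x (Ico_subset_Icc_self hx) (by simp only [heq]; linarith)
      rw [heq] at this
      linarith)
    ht
  refine key.trans (le_of_eq ?_)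
  simp only [hη]
  rw [mul_assoc, ← Real.exp_add]
  simp

/-- The scalar dissipation estimate, with `v = aᵀ P a`, `w = aᵀ Q a`, `r = ‖a‖`, and `d` the
derivative of `v` along the flow. -/
lemma deriv_bound {m M ε δ s F C r v w q d : ℝ} (hm : 0 < m) (hM : 0 < M) (hε : 0 < ε)
    (hs : 0 ≤ s) (hF : 0 ≤ F) (hr : 0 ≤ r) (h1 : m * r ^ 2 ≤ v) (h2 : v ≤ M * r ^ 2)
    (hw : 0 ≤ w) (hwq : w ≤ q) (hC : M * (s * F / ε) ^ 2 ≤ C) (hCδ : C ≤ m * δ ^ 2)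
    (hd : d + (δ ^ 2 - r ^ 2) * w + ε * r ^ 2 ≤ r * (s * F)) (hv : C ≤ v) :
    d ≤ q / m * (v - C) := by
  have hsr : s * F / ε ≤ r := by
    have : (s * F / ε) ^ 2 ≤ r ^ 2 := le_of_mul_le_mul_left (hC.trans (hv.trans h2)) hM
    exact (pow_le_pow_iff_left₀ (by positivity) hr two_ne_zero).1 this
  rw [div_le_iff₀ hε] at hsr
  have h3 : r * (s * F) ≤ r * (r * ε) := mul_le_mul_of_nonneg_left hsr hr
  have h4 : r ^ 2 - δ ^ 2 ≤ (v - C) / m := by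
    rw [le_div_iff₀ hm]; linarith
  have h5 : (r ^ 2 - δ ^ 2) * w ≤ (v - C) / m * w := mul_le_mul_of_nonneg_right h4 hw
  have h6 : (v - C) / m * w ≤ (v - C) / m * q :=
    mul_le_mul_of_nonneg_left hwq (div_nonneg (by linarith) hm.le)
  have h7 : (v - C) / m * q = q / m * (v - C) := by ring
  nlinarith

lemma eLinf_nonneg {n : ℕ} (g : ℝ → Fin n → ℝ) : 0 ≤ eLinf g :=
  Real.iSup_nonneg fun _ => eNorm_nonneg _

lemma eLinf_trunc_le {n : ℕ} {g : ℝ → Fin n → ℝ} {τ B : ℝ} (hB : 0 ≤ B)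
    (h : ∀ t ∈ Icc (0:ℝ) τ, eNorm (g t) ≤ B) : eLinf (trunc τ g) ≤ B := by
  refine ciSup_le fun t => ?_
  unfold trunc
  split_ifs with ht
  · exact h _ ⟨t.2, ht⟩
  · rwa [eNorm_zero]

lemma le_eLinf_trunc {n : ℕ} {g : ℝ → Fin n → ℝ} {τ B : ℝ} (hB : 0 ≤ B)
    (h : ∀ t ∈ Icc (0:ℝ) τ, eNorm (g t) ≤ B) {t : ℝ} (ht : t ∈ Icc (0:ℝ) τ) :
    eNorm (g t) ≤ eLinf (trunc τ g) := by
  have hbdd : BddAbove (range fun t : Set.Ici (0:ℝ) => eNorm (trunc τ g t.1)) := by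
    refine ⟨B, ?_⟩
    rintro _ ⟨t, rfl⟩
    simp only [trunc]
    split_ifs with ht
    · exact h _ ⟨t.2, ht⟩
    · rwa [eNorm_zero]
  have := le_ciSup hbdd ⟨t, ht.1⟩
  simp only [trunc, if_pos ht.2] at this
  exact this

/-- **SOS-certified L∞ input–output bound** (Theorem 3, case p = ∞):
under the SOS certificate, initial-condition and small-signal hypotheses,
the truncated output y = a satisfies ‖y_τ‖_{L∞} ≤ γ_SOS‖f_τ‖_{L∞} + β_SOS with
γ_SOS = λmax‖2P_SOS‖/(λmin·ε) and β_SOS = ‖a₀‖√(λmax/λmin). -/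
theorem sos_Linf_gain
    {n : ℕ} (L : Matrix (Fin n) (Fin n) ℝ)
    (hHurwitz : ∀ z ∈ spectrum ℂ (L.map (algebraMap ℝ ℂ)), z.re < 0)
    (R : Fin n → Matrix (Fin n) (Fin n) ℝ) (hRsym : ∀ m, (R m)ᵀ = R m)
    (hloss : ∀ a : Fin n → ℝ, a ⬝ᵥ Ups R a = 0)
    (ε δ : ℝ) (hε : 0 < ε) (hδ : 0 < δ)
    (P : Matrix (Fin n) (Fin n) ℝ) (hPsym : Pᵀ = P)
    (Q : Matrix (Fin n) (Fin n) ℝ) (hQ : Q.PosSemidef)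
    (hSOS₁ : ∀ a : Fin n → ℝ, ε * (a ⬝ᵥ a) ≤ a ⬝ᵥ P.mulVec a)
    (hSOS₂ : ∀ a : Fin n → ℝ,
      2 * (a ⬝ᵥ P.mulVec (L.mulVec a + Ups R a)) + (δ ^ 2 - a ⬝ᵥ a) * (a ⬝ᵥ Q.mulVec a)
        + ε * (a ⬝ᵥ a) ≤ 0)
    (τ : ℝ) (hτ : 0 < τ)
    (a₀ : Fin n → ℝ) (ha₀ : eNorm a₀ ≤ δ * Real.sqrt (lamMin P / lamMax P))
    (f : ℝ → Fin n → ℝ) (hfc : Continuous f)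
    (hfsmall : ∀ t ∈ Icc (0:ℝ) τ,
      eNorm (f t) ≤ lamMin P * ε * δ / (lamMax P * specNorm ((2:ℝ) • P)))
    (a : ℝ → Fin n → ℝ)
    (hode : ∀ t ∈ Icc (0:ℝ) τ,
      HasDerivWithinAt a (L.mulVec (a t) + Ups R (a t) + f t) (Icc (0:ℝ) τ) t)
    (hinit : a 0 = a₀) :
    eLinf (trunc τ a) ≤
      (lamMax P * specNorm ((2:ℝ) • P) / (lamMin P * ε)) * eLinf (trunc τ f)
        + eNorm a₀ * Real.sqrt (lamMax P / lamMin P) := by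
  have hγβ : ∀ m M s : ℝ, 0 ≤ m → 0 ≤ M → 0 ≤ s →
      0 ≤ (M * s / (m * ε)) * eLinf (trunc τ f) + eNorm a₀ * Real.sqrt (M / m) := by
    intro m M s hm hM hs
    have := eLinf_nonneg (trunc τ f)
    have := eNorm_nonneg a₀
    positivity
  rcases Nat.eq_zero_or_pos n with rfl | hn
  · -- In dimension zero every norm vanishes.
    have h0 : ∀ u : Fin 0 → ℝ, eNorm u = 0 := fun u => by simp [eNorm]
    simp [eLinf, h0]
  obtain ⟨u, hu⟩ : ∃ u : Fin n → ℝ, eNorm u = 1 := by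
    refine ⟨Pi.single ⟨0, hn⟩ 1, ?_⟩
    have h : eNorm (Pi.single ⟨0, hn⟩ 1 : Fin n → ℝ) ^ 2 = 1 := by
      rw [eNorm_sq]; simp
    exact (pow_eq_one_iff_of_nonneg (eNorm_nonneg _) two_ne_zero).1 h
  have hm : 0 < lamMin P := by
    refine hε.trans_le (le_csInf ⟨_, u, hu, rfl⟩ ?_)
    rintro _ ⟨v, hv, rfl⟩
    have := hSOS₁ v
    rwa [← eNorm_sq, hv, one_pow, mul_one] at this
  have hmM : lamMin P ≤ lamMax P := by
    have := (lamMin_mul_le P u).trans (le_lamMax_mul P u)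
    simpa [hu] using this
  have hM : 0 < lamMax P := hm.trans_le hmM
  have hs : 0 < specNorm ((2:ℝ) • P) := by
    have h1 := (dotProduct_le_eNorm u (((2:ℝ) • P).mulVec u))
    have h2 := eNorm_mulVec_le ((2:ℝ) • P) u
    have h3 := lamMin_mul_le P u
    rw [smul_mulVec, dotProduct_smul, smul_eq_mul] at h1
    rw [smul_mulVec] at h2
    rw [hu] at h1 h2 h3
    linarith
  have hMP := le_lamMax_mul P
  have hmP := lamMin_mul_le P
  have hsP := eNorm_mulVec_le ((2:ℝ) • P)
  have hγβ' := hγβ _ _ _ hm.le hM.le hs.le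
  generalize lamMin P = m at *
  generalize lamMax P = M at *
  generalize specNorm ((2:ℝ) • P) = s at *
  have hFB : 0 ≤ m * ε * δ / (M * s) := by positivity
  have hF0 := eLinf_nonneg (trunc τ f)
  have hFle : eLinf (trunc τ f) ≤ m * ε * δ / (M * s) := eLinf_trunc_le hFB hfsmall
  have hfF : ∀ t ∈ Icc (0:ℝ) τ, eNorm (f t) ≤ eLinf (trunc τ f) :=
    fun t ht => le_eLinf_trunc hFB hfsmall ht
  generalize eLinf (trunc τ f) = F at *
  have hr0 := eNorm_nonneg a₀
  set C := max (M * eNorm a₀ ^ 2) (M * (s * F / ε) ^ 2) with hC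
  -- The smallness of `a₀` controls the first entry of the maximum, that of `f` the second.
  have hCδ : C ≤ m * δ ^ 2 := by
    refine max_le ?_ ?_
    · have h := pow_le_pow_left₀ hr0 ha₀ 2
      rw [mul_pow, Real.sq_sqrt (by positivity)] at h
      calc M * eNorm a₀ ^ 2 ≤ M * (δ ^ 2 * (m / M)) := by gcongr
        _ = m * δ ^ 2 := by field_simp
    · have h : s * F / ε ≤ m * δ / M := by
        calc s * F / ε ≤ s * (m * ε * δ / (M * s)) / ε := by gcongr
          _ = m * δ / M := by field_simp
      calc M * (s * F / ε) ^ 2 ≤ M * (m * δ / M) ^ 2 := by gcongr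
        _ = m * δ ^ 2 * (m / M) := by field_simp
        _ ≤ m * δ ^ 2 * 1 := by
          gcongr
          exact (div_le_one hM).2 hmM
        _ = m * δ ^ 2 := mul_one _
  have hcont : ContinuousOn a (Icc 0 τ) := fun t ht => (hode t ht).continuousWithinAt
  obtain ⟨q, hq⟩ := isCompact_Icc.bddAbove_image ((continuous_quad Q).comp_continuousOn hcont)
  have hVC := le_of_deriv_le_mul_above (K := q / m) (C := C)
    (fun t ht => hasDerivWithinAt_quad hPsym (hode t ht))
    (by
      rw [hinit]
      exact (hMP a₀).trans (le_max_left _ _))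
    (fun t ht hv => by
      refine deriv_bound hm hM hε hs.le hF0 (eNorm_nonneg (a t)) (hmP _) (hMP _)
        ?_ (hq ⟨t, ht, rfl⟩) (le_max_right _ _) hCδ ?_ hv
      · simpa using hQ.dotProduct_mulVec_nonneg (a t)
      · have h1 := hSOS₂ (a t)
        have h2 : 2 * (a t ⬝ᵥ P.mulVec (f t)) ≤ eNorm (a t) * (s * F) := by
          calc 2 * (a t ⬝ᵥ P.mulVec (f t)) = a t ⬝ᵥ ((2:ℝ) • P).mulVec (f t) := by
                rw [smul_mulVec, dotProduct_smul, smul_eq_mul]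
            _ ≤ eNorm (a t) * eNorm (((2:ℝ) • P).mulVec (f t)) := dotProduct_le_eNorm _ _
            _ ≤ eNorm (a t) * (s * F) := by
                refine mul_le_mul_of_nonneg_left ((hsP _).trans ?_) (eNorm_nonneg _)
                exact mul_le_mul_of_nonneg_left (hfF t ht) hs.le
        rw [mulVec_add, dotProduct_add, eNorm_sq]
        simp only [Function.comp_apply]
        linarith)
  -- It suffices that `C ≤ m (γ F + β)²`, since `m ‖a t‖² ≤ V t ≤ C`.
  refine eLinf_trunc_le hγβ' fun t ht => ?_
  refine (pow_le_pow_iff_left₀ (eNorm_nonneg _) hγβ' two_ne_zero).1 ?_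
  refine le_of_mul_le_mul_left (((hmP (a t)).trans (hVC t ht)).trans ?_) hm
  have hγ : 0 ≤ M * s / (m * ε) * F := by positivity
  have hβ : 0 ≤ eNorm a₀ * Real.sqrt (M / m) := by positivity
  refine max_le ?_ ?_
  · calc M * eNorm a₀ ^ 2 = m * (eNorm a₀ * Real.sqrt (M / m)) ^ 2 := by
          rw [mul_pow, Real.sq_sqrt (by positivity)]; field_simp
      _ ≤ _ := by gcongr; linarith
  · calc M * (s * F / ε) ^ 2 = M * (s * F / ε) ^ 2 * 1 := (mul_one _).symm
      _ ≤ M * (s * F / ε) ^ 2 * (M / m) := by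
          gcongr
          exact (one_le_div hm).2 hmM
      _ = m * (M * s / (m * ε) * F) ^ 2 := by field_simp
      _ ≤ _ := by gcongr; linarith
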